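/- (Structure of the optimal transmit beamformer.) Let M ≥ 1 and let g, h ∈ ℂ^M with g ≠ 0. Define h∥ = ( ⟨g,h⟩ / ‖g‖² ) g and h⊥ = h − h∥, and suppose h∥ ≠ 0 and h⊥ ≠ 0; set w∥ = h∥/‖h∥‖ and w⊥ = h⊥/‖h⊥‖. Then for all real λ > 0 and μ > 0 there exist a real c > 0 and a real β with 0 < β < 1 such that c · ( λI + μ g g^H )^{-1} h = β w∥ + √(1 − β²) w⊥, and this vector has unit norm. -/

import Mathlib

/-!
Both `h∥ ∈ span g` and `h⊥ ∈ gᗮ` are eigenvectors of the positive definite matrix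
`lam I + mu g gᴴ`, with eigenvalues `lam + mu ‖g‖²` and `lam`. Its inverse therefore sends `h` to
`a w∥ + b w⊥` with `a = ‖h∥‖ / (lam + mu ‖g‖²) > 0` and `b = ‖h⊥‖ / lam > 0` (`inv_mulVec_eq`).
Taking `c = 1 / √(a² + b²)` and `β = c a` gives `√(1 - β²) = c b`, and the norm is one by
Pythagoras (`sum_norm_sq_unitize`).
-/

open Matrix

/-- The component of `h` parallel to `g`: `(⟨g,h⟩/‖g‖²) • g`. -/
noncomputable def parComp {M : ℕ} (g h : Fin M → ℂ) : Fin M → ℂ :=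
  ((star g ⬝ᵥ h) / ((∑ i, ‖g i‖ ^ 2 : ℝ) : ℂ)) • g

/-- The component of `h` orthogonal to `g`. -/
noncomputable def perpComp {M : ℕ} (g h : Fin M → ℂ) : Fin M → ℂ :=
  h - parComp g h

/-- Normalization of a vector to unit Euclidean norm. -/
noncomputable def unitize {M : ℕ} (v : Fin M → ℂ) : Fin M → ℂ :=
  (((Real.sqrt (∑ i, ‖v i‖ ^ 2))⁻¹ : ℝ) : ℂ) • v

theorem star_dotProduct_self_eq {M : ℕ} (v : Fin M → ℂ) :
    star v ⬝ᵥ v = ((∑ i, ‖v i‖ ^ 2 : ℝ) : ℂ) := by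
  simp only [dotProduct, Pi.star_apply, RCLike.star_def, Complex.conj_mul']
  push_cast
  rfl

theorem sum_norm_sq_pos {M : ℕ} {v : Fin M → ℂ} (hv : v ≠ 0) : 0 < ∑ i, ‖v i‖ ^ 2 := by
  obtain ⟨i, hi⟩ := Function.ne_iff.mp hv
  exact Finset.sum_pos' (fun j _ => by positivity)
    ⟨i, Finset.mem_univ i, pow_pos (norm_pos_iff.mpr hi) 2⟩

theorem star_dotProduct_perpComp {M : ℕ} {g : Fin M → ℂ} (hg : g ≠ 0) (h : Fin M → ℂ) :
    star g ⬝ᵥ perpComp g h = 0 := by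
  have hG : ((∑ i, ‖g i‖ ^ 2 : ℝ) : ℂ) ≠ 0 := by exact_mod_cast (sum_norm_sq_pos hg).ne'
  rw [perpComp, parComp, dotProduct_sub, dotProduct_smul, star_dotProduct_self_eq, smul_eq_mul,
    div_mul_cancel₀ _ hG, sub_self]

/-- Pythagoras for real combinations of the normalized vectors of an orthogonal pair. -/
theorem sum_norm_sq_unitize {M : ℕ} {p q : Fin M → ℂ} (hp : p ≠ 0) (hq : q ≠ 0)
    (hpq : star p ⬝ᵥ q = 0) (s t : ℝ) :
    ∑ i, ‖((s : ℂ) • unitize p + (t : ℂ) • unitize q) i‖ ^ 2 = s ^ 2 + t ^ 2 := by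
  have hqp : star q ⬝ᵥ p = 0 := by
    have := congrArg star hpq
    rwa [← star_dotProduct_star, star_star, star_zero] at this
  have hP := sum_norm_sq_pos hp
  have hQ := sum_norm_sq_pos hq
  have key : ∀ {v : Fin M → ℂ}, 0 < ∑ i, ‖v i‖ ^ 2 → star (unitize v) ⬝ᵥ unitize v = 1 := by
    intro v hv
    rw [unitize, star_smul, smul_dotProduct, dotProduct_smul, star_dotProduct_self_eq]
    simp only [RCLike.star_def, Complex.conj_ofReal, smul_eq_mul]
    norm_cast
    rw [← mul_assoc, ← mul_inv, Real.mul_self_sqrt hv.le, inv_mul_cancel₀ hv.ne']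
  have h1 : star (unitize p) ⬝ᵥ unitize q = 0 := by
    simp [unitize, star_smul, hpq]
  have h2 : star (unitize q) ⬝ᵥ unitize p = 0 := by
    simp [unitize, star_smul, hqp]
  have := star_dotProduct_self_eq ((s : ℂ) • unitize p + (t : ℂ) • unitize q)
  simp only [star_add, star_smul, add_dotProduct, dotProduct_add, smul_dotProduct,
    dotProduct_smul, key hP, key hQ, h1, h2, RCLike.star_def, Complex.conj_ofReal,
    smul_eq_mul] at this
  have h3 : ((s ^ 2 + t ^ 2 : ℝ) : ℂ)
      = ((∑ i, ‖((s : ℂ) • unitize p + (t : ℂ) • unitize q) i‖ ^ 2 : ℝ) : ℂ) := by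
    rw [← this]; push_cast; ring
  exact (Complex.ofReal_injective h3).symm

open scoped ComplexOrder in
/-- `g` is an eigenvector of `lam I + mu g gᴴ` with eigenvalue `lam + mu ‖g‖²`, and on `gᗮ` the
matrix acts as `lam`; hence the inverse acts on the two components of `h` by scaling. -/
theorem inv_mulVec_eq {M : ℕ} {g : Fin M → ℂ} (hg : g ≠ 0) (h : Fin M → ℂ) {lam mu : ℝ}
    (hl : 0 < lam) (hm : 0 < mu) :
    ((lam : ℂ) • (1 : Matrix (Fin M) (Fin M) ℂ) + (mu : ℂ) • vecMulVec g (star g))⁻¹ *ᵥ h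
      = (((lam + mu * ∑ i, ‖g i‖ ^ 2)⁻¹ : ℝ) : ℂ) • parComp g h
        + ((lam⁻¹ : ℝ) : ℂ) • perpComp g h := by
  set A := (lam : ℂ) • (1 : Matrix (Fin M) (Fin M) ℂ) + (mu : ℂ) • vecMulVec g (star g) with hA
  have hG := sum_norm_sq_pos hg
  have hAv : ∀ v, A *ᵥ v = (lam : ℂ) • v + ((mu : ℂ) * (star g ⬝ᵥ v)) • g := by
    intro v
    rw [hA, add_mulVec, smul_mulVec, smul_mulVec, one_mulVec, vecMulVec_mulVec]
    simp [smul_smul]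
  have hdet : IsUnit A.det := by
    rw [← isUnit_iff_isUnit_det]
    refine PosDef.isUnit ?_
    refine PosDef.add_posSemidef ?_ ?_
    · exact PosDef.one.smul (by exact_mod_cast hl)
    · exact (posSemidef_vecMulVec_self_star g).smul (by exact_mod_cast hm.le)
  have hpar : A *ᵥ parComp g h = ((lam + mu * ∑ i, ‖g i‖ ^ 2 : ℝ) : ℂ) • parComp g h := by
    rw [hAv, parComp, dotProduct_smul, star_dotProduct_self_eq, smul_smul, smul_smul, ← add_smul]
    congr 1
    push_cast
    rw [smul_eq_mul]
    ring
  have hperp : A *ᵥ perpComp g h = (lam : ℂ) • perpComp g h := by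
    rw [hAv, star_dotProduct_perpComp hg]; simp
  have hsol : A *ᵥ ((((lam + mu * ∑ i, ‖g i‖ ^ 2)⁻¹ : ℝ) : ℂ) • parComp g h
        + ((lam⁻¹ : ℝ) : ℂ) • perpComp g h) = h := by
    have h0 : lam + mu * ∑ i, ‖g i‖ ^ 2 ≠ 0 := by positivity
    rw [mulVec_add, mulVec_smul, mulVec_smul, hpar, hperp, smul_smul, smul_smul,
      ← Complex.ofReal_mul, ← Complex.ofReal_mul, inv_mul_cancel₀ h0, inv_mul_cancel₀ hl.ne']
    simp [perpComp]
  conv_lhs => rw [← hsol]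
  rw [mulVec_mulVec, nonsing_inv_mul _ hdet, one_mulVec]

theorem smul_unitize {M : ℕ} {v : Fin M → ℂ} (hv : v ≠ 0) :
    ((Real.sqrt (∑ i, ‖v i‖ ^ 2) : ℝ) : ℂ) • unitize v = v := by
  rw [unitize, smul_smul, ← Complex.ofReal_mul,
    mul_inv_cancel₀ (Real.sqrt_pos.mpr (sum_norm_sq_pos hv)).ne']
  simp

/-- **Structure of the optimal transmit beamformer.**  With `g ≠ 0`, `h∥ ≠ 0`, `h⊥ ≠ 0`,
for all `lam, mu > 0` there are `c > 0` and `β ∈ (0,1)` with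
`c • (lam I + mu g gᴴ)⁻¹ h = β w∥ + √(1-β²) w⊥`, a unit-norm vector. -/
theorem stmt6 (M : ℕ) (hM : 1 ≤ M) (g h : Fin M → ℂ) (hg : g ≠ 0)
    (hpar : parComp g h ≠ 0) (hperp : perpComp g h ≠ 0) :
    ∀ lam mu : ℝ, 0 < lam → 0 < mu →
      ∃ c : ℝ, 0 < c ∧ ∃ β : ℝ, 0 < β ∧ β < 1 ∧
        (c : ℂ) • (((lam : ℂ) • (1 : Matrix (Fin M) (Fin M) ℂ)
              + (mu : ℂ) • vecMulVec g (star g))⁻¹ *ᵥ h)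
          = (β : ℂ) • unitize (parComp g h)
              + ((Real.sqrt (1 - β ^ 2) : ℝ) : ℂ) • unitize (perpComp g h) ∧
        ∑ i, ‖((β : ℂ) • unitize (parComp g h)
              + ((Real.sqrt (1 - β ^ 2) : ℝ) : ℂ) • unitize (perpComp g h)) i‖ ^ 2 = 1 := by
  intro lam mu hl hm
  have hG := sum_norm_sq_pos hg
  have hP := Real.sqrt_pos.mpr (sum_norm_sq_pos hpar)
  have hQ := Real.sqrt_pos.mpr (sum_norm_sq_pos hperp)
  have horth : star (parComp g h) ⬝ᵥ perpComp g h = 0 := by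
    rw [parComp, star_smul, smul_dotProduct, star_dotProduct_perpComp hg, smul_zero]
  -- `a`, `b` are the coordinates of `(lam I + mu g gᴴ)⁻¹ h` along `w∥`, `w⊥`.
  obtain ⟨a, ha⟩ : ∃ a, a = (lam + mu * ∑ i, ‖g i‖ ^ 2)⁻¹
    * Real.sqrt (∑ i, ‖parComp g h i‖ ^ 2) := ⟨_, rfl⟩
  obtain ⟨b, hb⟩ : ∃ b, b = lam⁻¹ * Real.sqrt (∑ i, ‖perpComp g h i‖ ^ 2) := ⟨_, rfl⟩
  have ha0 : 0 < a := by rw [ha]; positivity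
  have hb0 : 0 < b := by rw [hb]; positivity
  have hinv : ((lam : ℂ) • (1 : Matrix (Fin M) (Fin M) ℂ)
        + (mu : ℂ) • vecMulVec g (star g))⁻¹ *ᵥ h
      = (a : ℂ) • unitize (parComp g h) + (b : ℂ) • unitize (perpComp g h) := by
    rw [inv_mulVec_eq hg h hl hm, ha, hb, Complex.ofReal_mul, Complex.ofReal_mul, mul_smul,
      mul_smul, smul_unitize hpar, smul_unitize hperp]
  obtain ⟨c, hc⟩ : ∃ c, c = (Real.sqrt (a ^ 2 + b ^ 2))⁻¹ := ⟨_, rfl⟩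
  have hc0 : 0 < c := by rw [hc]; positivity
  have hsum : (c * a) ^ 2 + (c * b) ^ 2 = 1 := by
    have h0 : a ^ 2 + b ^ 2 ≠ 0 := by positivity
    rw [mul_pow, mul_pow, ← mul_add, hc, inv_pow, Real.sq_sqrt (by positivity),
      inv_mul_cancel₀ h0]
  have hca : 0 < c * a := by positivity
  have hcb : 0 < c * b := by positivity
  have hsqrt : Real.sqrt (1 - (c * a) ^ 2) = c * b := by
    rw [← hsum, add_sub_cancel_left, Real.sqrt_sq hcb.le]
  refine ⟨c, hc0, c * a, hca, by nlinarith, ?_, ?_⟩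
  · rw [hinv, hsqrt, smul_add, smul_smul, smul_smul, Complex.ofReal_mul, Complex.ofReal_mul]
  · rw [hsqrt, sum_norm_sq_unitize hpar hperp horth, hsum]
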